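/- Let F be the set of f ∈ C¹([-1,1]) with f(±1) = ±1, f'(±1) > 0, f(y) ∈ (-1,1) for y ∈ (-1,1), and f(-y) = -f(y). For f ∈ F define F(y) = ∫_{-1}^{y} f'(s)·s ds, I₁(f) = ∫₀¹ F(y)²/(1 - f(y)²) dy and I₂(f) = ∫₀¹ (1 - f(y))·y dy. Then for every f ∈ F with f ≠ id, the strict inequality 6·I₂(f)³ < I₁(f)² holds, with equality when f = id. -/

import Mathlib

/-!
On `[0, 1]` integration by parts turns `-F(y)` into `y (1 - f(y)) + ∫_y^1 (1 - f)`, so that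
`-∫₀¹ F = 2 I₂`. With `J = ∫₀¹ (1 - f²)`, the Cauchy–Schwarz inequality for the weight `1 - f²`
gives `4 I₂² ≤ I₁ J`. For every `t > 0` the function `f(y) = min (y / t) 1` minimizes
`(1 - f(y)) y - (t / 2) (1 - f(y)²)` pointwise; integrating and taking `t = 3 J / 2` gives
`3 J² / 8 ≤ I₂`, and the conditions `f(1) = 1` and `f < 1` on `[0, 1)` leave only `t = 1`, that is
`f = id`, as a case of equality. Eliminating `J` yields `6 I₂³ ≤ I₁²`.
-/

open MeasureTheory Set Filter Topology Asymptotics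

section Calculus

theorem sq_integral_le_integral_sq_div_mul_integral {α : Type*} [MeasurableSpace α]
    {μ : Measure α} {u w : α → ℝ} (hw_pos : ∀ᵐ x ∂μ, 0 < w x) (hu : Integrable u μ)
    (hw : Integrable w μ) (huw : Integrable (fun x => u x ^ 2 / w x) μ) :
    (∫ x, u x ∂μ) ^ 2 ≤ (∫ x, u x ^ 2 / w x ∂μ) * ∫ x, w x ∂μ := by
  have quadratic_nonneg (a : ℝ) : 0 ≤ (∫ x, w x ∂μ) * (a * a) + (-2 * ∫ x, u x ∂μ) * a
      + ∫ x, u x ^ 2 / w x ∂μ := by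
    calc 0 ≤ ∫ x, w x * (a * a) + -2 * u x * a + u x ^ 2 / w x ∂μ := by
          refine integral_nonneg_of_ae (hw_pos.mono fun x hx => ?_)
          have : w x * (a * a) + -2 * u x * a + u x ^ 2 / w x = (u x - a * w x) ^ 2 / w x := by
            field_simp
            ring
          simp only [Pi.zero_apply, this]
          positivity
      _ = _ := by
          have hw_term : Integrable (fun x => w x * (a * a)) μ := hw.mul_const _
          have hu_term : Integrable (fun x => -2 * u x * a) μ := (hu.const_mul _).mul_const _
          rw [integral_add (hw_term.fun_add hu_term) huw, integral_add hw_term hu_term,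
            integral_mul_const, integral_mul_const, integral_const_mul]
  have discrim_nonpos := discrim_le_zero quadratic_nonneg
  rw [discrim] at discrim_nonpos
  linarith

theorem integral_integral_right_eq_integral_sub_mul {g : ℝ → ℝ} {a b : ℝ}
    (hg : IntervalIntegrable g volume a b) :
    ∫ y in a..b, ∫ s in y..b, g s = ∫ y in a..b, (y - a) * g y := by
  have sub_ac : AbsolutelyContinuousOnInterval (fun y => y - a) a b :=
    ContDiffOn.absolutelyContinuousOnInterval (by fun_prop)
  have primitive_ac : AbsolutelyContinuousOnInterval (fun y => ∫ s in b..y, g s) a b :=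
    hg.absolutelyContinuousOnInterval_intervalIntegral right_mem_uIcc
  have deriv_primitive : ∀ᵐ y, y ∈ uIoc a b → (y - a) * deriv (fun y => ∫ s in b..y, g s) y
      = (y - a) * g y := by
    filter_upwards [hg.ae_hasDerivAt_integral] with y hy hyab
    rw [(hy (uIoc_subset_uIcc hyab) b right_mem_uIcc).deriv]
  have parts := sub_ac.integral_mul_deriv_eq_deriv_mul primitive_ac
  rw [intervalIntegral.integral_congr_ae deriv_primitive] at parts
  rw [parts]
  simp [intervalIntegral.integral_symm b]

theorem continuousOn_integral_right {g : ℝ → ℝ} {a b : ℝ} (hab : a ≤ b)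
    (hg : ContinuousOn g (Icc a b)) : ContinuousOn (fun y => ∫ s in y..b, g s) (Icc a b) := by
  rw [← uIcc_of_le hab] at hg ⊢
  exact intervalIntegral.continuousOn_primitive_interval_left
    (hg.integrableOn_compact isCompact_uIcc)

theorem continuousWithinAt_sq_div {𝕜 : Type*} [NontriviallyNormedField 𝕜] {u w : 𝕜 → 𝕜}
    {u' w' a : 𝕜} {s : Set 𝕜} (hu : HasDerivWithinAt u u' s a) (hw : HasDerivWithinAt w w' s a)
    (hw' : w' ≠ 0) (hua : u a = 0) (hwa : w a = 0) :
    ContinuousWithinAt (fun x => u x ^ 2 / w x) s a := by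
  have u_isBigO_w : u =O[𝓝[s] a] w := by
    simpa [hua, hwa, Function.comp_def] using
      hu.isBigO_sub.trans (hw.isTheta_sub hw').isBigO_symm
  have quotient_isBigO : (fun x => u x ^ 2 / w x) =O[𝓝[s] a] u := by
    simpa [sq, mul_div_assoc] using
      (isBigO_refl u _).mul ((div_isBoundedUnder_of_isBigO u_isBigO_w).isBigO_one 𝕜)
  have u_tendsto : Tendsto u (𝓝[s] a) (𝓝 0) := hua ▸ hu.continuousWithinAt
  simpa [ContinuousWithinAt, hua] using quotient_isBigO.trans_tendsto u_tendsto

theorem integral_eq_zero_of_odd {f : ℝ → ℝ} {a : ℝ}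
    (hodd : ∀ y ∈ uIcc (-a) a, f (-y) = -f y) : ∫ y in -a..a, f y = 0 := by
  have : ∫ y in -a..a, f y = -∫ y in -a..a, f y := by
    calc ∫ y in -a..a, f y = ∫ y in -a..a, f (-y) := by
          rw [intervalIntegral.integral_comp_neg, neg_neg]
      _ = -∫ y in -a..a, f y := by
          rw [intervalIntegral.integral_congr hodd, intervalIntegral.integral_neg]
  linarith

end Calculus

section Extremal

variable {f : ℝ → ℝ} {t x y : ℝ}

theorem half_mul_one_sub_sq_lt (ht : 0 < t) (hx : x ≤ 1) (hxy : x ≠ min (y / t) 1) :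
    t / 2 * (1 - x ^ 2) < (1 - x) * y + max (t - y) 0 ^ 2 / (2 * t) := by
  rcases le_total y t with hyt | hty
  · rw [min_eq_left ((div_le_one ht).2 hyt)] at hxy
    rw [max_eq_left (sub_nonneg.2 hyt), ← sub_pos]
    have : (1 - x) * y + (t - y) ^ 2 / (2 * t) - t / 2 * (1 - x ^ 2)
        = t / 2 * (x - y / t) ^ 2 := by
      field_simp
      ring
    rw [this]
    have := sub_ne_zero.2 hxy
    positivity
  · rw [min_eq_right ((one_le_div ht).2 hty)] at hxy
    have hx1 : x < 1 := lt_of_le_of_ne hx hxy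
    have : 0 < (1 - x) * (y - t / 2 * (1 + x)) := mul_pos (by linarith) (by nlinarith)
    rw [max_eq_right (sub_nonpos.2 hty)]
    ring_nf at this ⊢
    linarith

theorem half_mul_one_sub_sq_le (ht : 0 < t) (hx : x ≤ 1) :
    t / 2 * (1 - x ^ 2) ≤ (1 - x) * y + max (t - y) 0 ^ 2 / (2 * t) := by
  rcases ne_or_eq x (min (y / t) 1) with hne | rfl
  · exact (half_mul_one_sub_sq_lt ht hx hne).le
  · rcases le_total y t with hyt | hty
    · rw [min_eq_left ((div_le_one ht).2 hyt), max_eq_left (sub_nonneg.2 hyt)]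
      apply le_of_eq
      field_simp
      ring
    · rw [min_eq_right ((one_le_div ht).2 hty)]
      simp only [one_pow, sub_self, mul_zero, zero_mul, zero_add]
      positivity

theorem integral_max_sub_zero_sq_le (ht : 0 ≤ t) (b : ℝ) :
    ∫ y in 0..b, max (t - y) 0 ^ 2 ≤ t ^ 3 / 3 := by
  have integrable (c d : ℝ) : IntervalIntegrable (fun y => max (t - y) 0 ^ 2) volume c d :=
    Continuous.intervalIntegrable (by fun_prop) c d
  have integral_left : ∫ y in 0..t, max (t - y) 0 ^ 2 = t ^ 3 / 3 := by
    calc ∫ y in 0..t, max (t - y) 0 ^ 2 = ∫ y in 0..t, (t - y) ^ 2 := by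
          refine intervalIntegral.integral_congr fun y hy => ?_
          rw [uIcc_of_le ht] at hy
          simp only [max_eq_left (sub_nonneg.2 hy.2)]
      _ = t ^ 3 / 3 := by
          rw [intervalIntegral.integral_comp_sub_left (fun y => y ^ 2), integral_pow]
          norm_num
  have integral_right : ∫ y in t..b, max (t - y) 0 ^ 2 ≤ 0 := by
    rcases le_total t b with htb | hbt
    · rw [intervalIntegral.integral_congr (g := fun _ => 0), intervalIntegral.integral_zero]
      intro y hy
      rw [uIcc_of_le htb] at hy
      simp only [max_eq_right (sub_nonpos.2 hy.1), zero_pow two_ne_zero]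
    · rw [intervalIntegral.integral_symm, neg_nonpos]
      exact intervalIntegral.integral_nonneg hbt fun y _ => by positivity
  rw [← intervalIntegral.integral_add_adjacent_intervals (integrable 0 t) (integrable t b)]
  linarith

theorem half_mul_integral_one_sub_sq_lt (ht : 0 < t) (hf : ContinuousOn f (Icc 0 1))
    (hle : ∀ y ∈ Icc (0 : ℝ) 1, f y ≤ 1) (hne : ∃ y ∈ Icc (0 : ℝ) 1, f y ≠ min (y / t) 1) :
    t / 2 * ∫ y in (0 : ℝ)..1, (1 - f y ^ 2) <
      (∫ y in (0 : ℝ)..1, (1 - f y) * y) + t ^ 2 / 6 := by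
  obtain ⟨c, hc, hfc⟩ := hne
  have moment_cont : ContinuousOn (fun y => (1 - f y) * y) (Icc 0 1) := by fun_prop
  have defect_cont : ContinuousOn (fun y => max (t - y) 0 ^ 2 / (2 * t)) (Icc 0 1) := by fun_prop
  calc t / 2 * ∫ y in (0 : ℝ)..1, (1 - f y ^ 2)
      = ∫ y in (0 : ℝ)..1, t / 2 * (1 - f y ^ 2) := by rw [intervalIntegral.integral_const_mul]
    _ < ∫ y in (0 : ℝ)..1, ((1 - f y) * y + max (t - y) 0 ^ 2 / (2 * t)) :=
        intervalIntegral.integral_lt_integral_of_continuousOn_of_le_of_exists_lt one_pos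
          (by fun_prop) (moment_cont.add defect_cont)
          (fun y hy => half_mul_one_sub_sq_le ht (hle y (Ioc_subset_Icc_self hy)))
          ⟨c, hc, half_mul_one_sub_sq_lt ht (hle c hc) hfc⟩
    _ = (∫ y in (0 : ℝ)..1, (1 - f y) * y)
          + (∫ y in (0 : ℝ)..1, max (t - y) 0 ^ 2) / (2 * t) := by
        rw [intervalIntegral.integral_add (moment_cont.intervalIntegrable_of_Icc zero_le_one)
          (defect_cont.intervalIntegrable_of_Icc zero_le_one), intervalIntegral.integral_div]
    _ ≤ (∫ y in (0 : ℝ)..1, (1 - f y) * y) + t ^ 3 / 3 / (2 * t) := by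
        gcongr
        exact integral_max_sub_zero_sq_le ht.le 1
    _ = (∫ y in (0 : ℝ)..1, (1 - f y) * y) + t ^ 2 / 6 := by
        field_simp
        ring

theorem eq_one_of_eq_min_div (ht : 0 < t) (h1 : f 1 = 1) (hlt : ∀ y ∈ Ico (0 : ℝ) 1, f y < 1)
    (hf : ∀ y ∈ Icc (0 : ℝ) 1, f y = min (y / t) 1) : t = 1 := by
  have ht1 : t ≤ 1 := by
    rw [← one_le_div ht, ← min_eq_right_iff, ← hf 1 (right_mem_Icc.2 zero_le_one), h1]
  refine ht1.eq_of_not_lt fun hlt1 => (hlt t ⟨ht.le, hlt1⟩).ne ?_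
  rw [hf t ⟨ht.le, ht1⟩, div_self ht.ne', min_self]

theorem three_eighths_mul_sq_integral_lt (hf : ContinuousOn f (Icc 0 1)) (h1 : f 1 = 1)
    (hlt : ∀ y ∈ Ico (0 : ℝ) 1, f y < 1) (hJ : 0 < ∫ y in (0 : ℝ)..1, (1 - f y ^ 2))
    (hne : ¬ ∀ y ∈ Icc (0 : ℝ) 1, f y = y) :
    3 / 8 * (∫ y in (0 : ℝ)..1, (1 - f y ^ 2)) ^ 2 < ∫ y in (0 : ℝ)..1, (1 - f y) * y := by
  set J := ∫ y in (0 : ℝ)..1, (1 - f y ^ 2)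
  have ht : 0 < 3 / 2 * J := by positivity
  have hle : ∀ y ∈ Icc (0 : ℝ) 1, f y ≤ 1 := fun y hy =>
    hy.2.eq_or_lt.elim (fun h => by rw [h, h1]) fun h => (hlt y ⟨hy.1, h⟩).le
  have not_minimizer : ∃ y ∈ Icc (0 : ℝ) 1, f y ≠ min (y / (3 / 2 * J)) 1 := by
    by_contra! hmin
    refine hne fun y hy => ?_
    rw [hmin y hy, eq_one_of_eq_min_div ht h1 hlt hmin, div_one, min_eq_left hy.2]
  have := half_mul_integral_one_sub_sq_lt ht hf hle not_minimizer
  linarith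

end Extremal

/-- The tail moment `∫ s in y..1, s df(s)` of a function with `f 1 = 1`, in the integrated-by-parts
form that makes sense without a derivative. For `f` odd and `C¹` with `f 1 = 1` it is `-F(y)`, where
`F(y) = ∫ s in -1..y, f' s * s`. -/
noncomputable def tailMoment (f : ℝ → ℝ) (y : ℝ) : ℝ :=
  y * (1 - f y) + ∫ s in y..1, (1 - f s)

section TailMoment

variable {f f' : ℝ → ℝ}

theorem one_sub_sq_pos {x : ℝ} (hx : x ∈ Ioo (-1) 1) : 0 < 1 - x ^ 2 :=
  sub_pos.2 ((sq_lt_one_iff_abs_lt_one x).2 (abs_lt.2 hx))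

theorem tailMoment_one (h1 : f 1 = 1) : tailMoment f 1 = 0 := by
  simp [tailMoment, h1]

theorem continuousOn_tailMoment (hf : ContinuousOn f (Icc 0 1)) :
    ContinuousOn (tailMoment f) (Icc 0 1) := by
  have tail_cont := continuousOn_integral_right zero_le_one (continuousOn_const (c := 1) |>.sub hf)
  unfold tailMoment
  fun_prop

theorem hasDerivWithinAt_tailMoment_one {d : ℝ} (hf : ContinuousOn f (Icc 0 1)) (h1 : f 1 = 1)
    (hd : HasDerivWithinAt f d (Icc 0 1) 1) :
    HasDerivWithinAt (tailMoment f) (-d) (Icc 0 1) 1 := by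
  have one_mem : (1 : ℝ) ∈ Icc (0 : ℝ) 1 := right_mem_Icc.2 zero_le_one
  have : Fact ((1 : ℝ) ∈ Icc (0 : ℝ) 1) := ⟨one_mem⟩
  have hg : ContinuousOn (fun s => 1 - f s) (Icc 0 1) := continuousOn_const.sub hf
  have tail := intervalIntegral.integral_hasDerivWithinAt_left (s := Icc (0 : ℝ) 1)
    (t := Icc (0 : ℝ) 1) (IntervalIntegrable.refl (a := (1 : ℝ)))
    (hg.stronglyMeasurableAtFilter_nhdsWithin measurableSet_Icc 1) (hg 1 one_mem)
  refine (((hasDerivWithinAt_id 1 _).mul (hd.const_sub 1)).add tail).congr_deriv ?_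
  simp [h1]

theorem integral_tailMoment (hf : ContinuousOn f (Icc 0 1)) :
    ∫ y in (0 : ℝ)..1, tailMoment f y = 2 * ∫ y in (0 : ℝ)..1, (1 - f y) * y := by
  have hg : ContinuousOn (fun y => 1 - f y) (Icc 0 1) := continuousOn_const.sub hf
  have hg_int := hg.intervalIntegrable_of_Icc (μ := volume) zero_le_one
  have moment_int : IntervalIntegrable (fun y => y * (1 - f y)) volume 0 1 :=
    hg_int.continuousOn_mul continuousOn_id
  have tail_int : IntervalIntegrable (fun y => ∫ s in y..1, (1 - f s)) volume 0 1 :=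
    (continuousOn_integral_right zero_le_one hg).intervalIntegrable_of_Icc zero_le_one
  unfold tailMoment
  rw [intervalIntegral.integral_add moment_int tail_int,
    integral_integral_right_eq_integral_sub_mul hg_int, two_mul]
  simp only [sub_zero, mul_comm]

theorem integral_deriv_mul_id_eq_tailMoment {y : ℝ}
    (hderiv : ∀ s ∈ uIcc y 1, HasDerivWithinAt f (f' s) (uIcc y 1) s)
    (hint : IntervalIntegrable f' volume y 1) (h1 : f 1 = 1) :
    ∫ s in y..1, f' s * s = tailMoment f y := by
  have parts := intervalIntegral.integral_mul_deriv_eq_deriv_mul_of_hasDerivWithinAt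
    (fun s _ => hasDerivWithinAt_id s _) (fun s hs => (hderiv s hs).sub_const 1)
    intervalIntegrable_const hint
  calc ∫ s in y..1, f' s * s = ∫ s in y..1, id s * f' s := by simp only [id, mul_comm]
    _ = y * (1 - f y) - ∫ s in y..1, (f s - 1) := by
        rw [parts]
        simp [h1]
        ring
    _ = tailMoment f y := by
        simp_rw [tailMoment, ← neg_sub 1 (f _), intervalIntegral.integral_neg, sub_neg_eq_add]

theorem intervalIntegrable_tailMoment_sq_div {d : ℝ} (hf : ContinuousOn f (Icc 0 1))
    (h1 : f 1 = 1) (hrange : MapsTo f (Ico 0 1) (Ioo (-1) 1))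
    (hd : HasDerivWithinAt f d (Icc 0 1) 1) (hd0 : d ≠ 0) :
    IntervalIntegrable (fun y => tailMoment f y ^ 2 / (1 - f y ^ 2)) volume 0 1 := by
  refine ContinuousOn.intervalIntegrable_of_Icc zero_le_one fun y hy => ?_
  rcases hy.2.eq_or_lt with rfl | hy1
  · exact continuousWithinAt_sq_div (hasDerivWithinAt_tailMoment_one hf h1 hd)
      ((hd.pow 2).const_sub 1) (by simpa [h1] using hd0) (tailMoment_one h1) (by simp [h1])
  · exact ((continuousOn_tailMoment hf y hy).pow 2).div
      (continuousWithinAt_const.sub ((hf y hy).pow 2)) (one_sub_sq_pos (hrange ⟨hy.1, hy1⟩)).ne'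

theorem four_mul_sq_integral_le (hf : ContinuousOn f (Icc 0 1))
    (hrange : MapsTo f (Ico 0 1) (Ioo (-1) 1))
    (hint : IntervalIntegrable (fun y => tailMoment f y ^ 2 / (1 - f y ^ 2)) volume 0 1) :
    4 * (∫ y in (0 : ℝ)..1, (1 - f y) * y) ^ 2 ≤
      (∫ y in (0 : ℝ)..1, tailMoment f y ^ 2 / (1 - f y ^ 2)) *
        ∫ y in (0 : ℝ)..1, (1 - f y ^ 2) := by
  have weight_pos : ∀ᵐ y ∂volume.restrict (Ioc (0 : ℝ) 1), 0 < 1 - f y ^ 2 := by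
    rw [← restrict_Ioo_eq_restrict_Ioc]
    exact ae_restrict_of_forall_mem measurableSet_Ioo
      fun y hy => one_sub_sq_pos (hrange (Ioo_subset_Ico_self hy))
  have weight_int : IntervalIntegrable (fun y => 1 - f y ^ 2) volume 0 1 :=
    ContinuousOn.intervalIntegrable_of_Icc zero_le_one (by fun_prop)
  have cauchy_schwarz := sq_integral_le_integral_sq_div_mul_integral weight_pos
    ((continuousOn_tailMoment hf).intervalIntegrable_of_Icc zero_le_one).1 weight_int.1 hint.1
  simp only [← intervalIntegral.integral_of_le zero_le_one, integral_tailMoment hf]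
    at cauchy_schwarz
  linarith

end TailMoment

section Inequality

variable {f : ℝ → ℝ}

theorem six_mul_cube_lt (hf : ContinuousOn f (Icc 0 1)) (h1 : f 1 = 1)
    (hrange : MapsTo f (Ico 0 1) (Ioo (-1) 1))
    (hint : IntervalIntegrable (fun y => tailMoment f y ^ 2 / (1 - f y ^ 2)) volume 0 1)
    (hne : ¬ ∀ y ∈ Icc (0 : ℝ) 1, f y = y) :
    6 * (∫ y in (0 : ℝ)..1, (1 - f y) * y) ^ 3 <
      (∫ y in (0 : ℝ)..1, tailMoment f y ^ 2 / (1 - f y ^ 2)) ^ 2 := by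
  have hJ : 0 < ∫ y in (0 : ℝ)..1, (1 - f y ^ 2) :=
    intervalIntegral.intervalIntegral_pos_of_pos_on
      (ContinuousOn.intervalIntegrable_of_Icc zero_le_one (by fun_prop))
      (fun y hy => one_sub_sq_pos (hrange (Ioo_subset_Ico_self hy))) one_pos
  have cauchy_schwarz := four_mul_sq_integral_le hf hrange hint
  have extremal := three_eighths_mul_sq_integral_lt hf h1 (fun y hy => (hrange hy).2) hJ hne
  set I₁ := ∫ y in (0 : ℝ)..1, tailMoment f y ^ 2 / (1 - f y ^ 2)
  set I₂ := ∫ y in (0 : ℝ)..1, (1 - f y) * y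
  set J := ∫ y in (0 : ℝ)..1, (1 - f y ^ 2)
  have hI₂ : 0 < I₂ := lt_of_le_of_lt (by positivity) extremal
  have hI₁ : 0 < I₁ := pos_of_mul_pos_left (lt_of_lt_of_le (by positivity) cauchy_schwarz) hJ.le
  refine lt_of_mul_lt_mul_right ?_ hI₂.le
  calc 6 * I₂ ^ 3 * I₂ = 3 / 8 * (4 * I₂ ^ 2) ^ 2 := by ring
    _ ≤ 3 / 8 * (I₁ * J) ^ 2 := by gcongr
    _ = I₁ ^ 2 * (3 / 8 * J ^ 2) := by ring
    _ < I₁ ^ 2 * I₂ := by gcongr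

theorem tailMoment_eq_of_eq_id {y : ℝ} (hy : y ∈ Icc (0 : ℝ) 1)
    (hf : ∀ y ∈ Icc (0 : ℝ) 1, f y = y) : tailMoment f y = (1 - y ^ 2) / 2 := by
  have tail : ∫ s in y..1, (1 - f s) = ∫ s in y..1, (1 - s) := by
    refine intervalIntegral.integral_congr fun s hs => ?_
    rw [uIcc_of_le hy.2] at hs
    simp only [hf s ⟨hy.1.trans hs.1, hs.2⟩]
  rw [tailMoment, tail, hf y hy, intervalIntegral.integral_sub intervalIntegrable_const
    intervalIntegral.intervalIntegrable_id, intervalIntegral.integral_const, integral_id,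
    smul_eq_mul]
  ring

theorem integral_one_sub_mul_of_eq_id (hf : ∀ y ∈ Icc (0 : ℝ) 1, f y = y) :
    ∫ y in (0 : ℝ)..1, (1 - f y) * y = 1 / 6 := by
  calc ∫ y in (0 : ℝ)..1, (1 - f y) * y = ∫ y in (0 : ℝ)..1, (y - y ^ 2) := by
        refine intervalIntegral.integral_congr fun y hy => ?_
        rw [uIcc_of_le zero_le_one] at hy
        simp only [hf y hy]
        ring
    _ = 1 / 6 := by
        rw [intervalIntegral.integral_sub intervalIntegral.intervalIntegrable_id
          (intervalIntegral.intervalIntegrable_pow 2), integral_id, integral_pow]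
        norm_num

theorem integral_tailMoment_sq_div_of_eq_id (hf : ∀ y ∈ Icc (0 : ℝ) 1, f y = y) :
    ∫ y in (0 : ℝ)..1, tailMoment f y ^ 2 / (1 - f y ^ 2) = 1 / 6 := by
  calc ∫ y in (0 : ℝ)..1, tailMoment f y ^ 2 / (1 - f y ^ 2)
      = ∫ y in (0 : ℝ)..1, (1 - y ^ 2) / 4 := by
        refine intervalIntegral.integral_congr fun y hy => ?_
        rw [uIcc_of_le zero_le_one] at hy
        simp only [tailMoment_eq_of_eq_id hy hf, hf y hy]
        rcases eq_or_ne (1 - y ^ 2) 0 with h | h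
        · simp [h]
        · field_simp
          norm_num
    _ = 1 / 6 := by
        rw [intervalIntegral.integral_div, intervalIntegral.integral_sub intervalIntegrable_const
          (intervalIntegral.intervalIntegrable_pow 2), intervalIntegral.integral_const,
          integral_pow]
        norm_num

theorem stmt_9_general (f : ℝ → ℝ) (hf : ContinuousOn f (Icc 0 1)) (h1 : f 1 = 1)
    (hrange : MapsTo f (Ico 0 1) (Ioo (-1) 1))
    (hint : IntervalIntegrable (fun y => tailMoment f y ^ 2 / (1 - f y ^ 2)) volume 0 1) :
    (¬ (∀ y ∈ Icc (0 : ℝ) 1, f y = y) →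
      6 * (∫ y in (0 : ℝ)..1, (1 - f y) * y) ^ 3 <
        (∫ y in (0 : ℝ)..1, tailMoment f y ^ 2 / (1 - f y ^ 2)) ^ 2) ∧
    ((∀ y ∈ Icc (0 : ℝ) 1, f y = y) →
      6 * (∫ y in (0 : ℝ)..1, (1 - f y) * y) ^ 3 =
        (∫ y in (0 : ℝ)..1, tailMoment f y ^ 2 / (1 - f y ^ 2)) ^ 2) := by
  refine ⟨six_mul_cube_lt hf h1 hrange hint, fun hid => ?_⟩
  rw [integral_one_sub_mul_of_eq_id hid, integral_tailMoment_sq_div_of_eq_id hid]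
  norm_num

end Inequality

section Odd

variable {f f' : ℝ → ℝ}

theorem forall_eq_id_iff_of_odd {a : ℝ} (hodd : ∀ y ∈ Icc (-a) a, f (-y) = -f y) :
    (∀ y ∈ Icc (-a) a, f y = y) ↔ ∀ y ∈ Icc 0 a, f y = y := by
  refine ⟨fun h y hy => h y ⟨by linarith [hy.1, hy.2], hy.2⟩, fun h y hy => ?_⟩
  rcases le_total 0 y with hy0 | hy0
  · exact h y ⟨hy0, hy.2⟩
  · rw [← neg_inj, ← hodd y hy, h (-y) ⟨neg_nonneg.2 hy0, neg_le.1 hy.1⟩]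

theorem integral_deriv_mul_id_eq_zero_of_odd {a : ℝ}
    (hderiv : ∀ s ∈ uIcc (-a) a, HasDerivWithinAt f (f' s) (uIcc (-a) a) s)
    (hint : IntervalIntegrable f' volume (-a) a)
    (hodd : ∀ y ∈ uIcc (-a) a, f (-y) = -f y) : ∫ s in -a..a, f' s * s = 0 := by
  have parts := intervalIntegral.integral_mul_deriv_eq_deriv_mul_of_hasDerivWithinAt
    (fun s _ => hasDerivWithinAt_id s _) hderiv intervalIntegrable_const hint
  simp only [id, one_mul, integral_eq_zero_of_odd hodd, hodd a right_mem_uIcc] at parts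
  simp only [mul_comm (f' _), parts]
  ring

theorem integral_deriv_mul_id_eq_neg_tailMoment
    (hderiv : ∀ s ∈ Icc (-1 : ℝ) 1, HasDerivWithinAt f (f' s) (Icc (-1) 1) s)
    (hint : IntervalIntegrable f' volume (-1) 1) (h1 : f 1 = 1)
    (hodd : ∀ y ∈ Icc (-1 : ℝ) 1, f (-y) = -f y) {y : ℝ} (hy : y ∈ Icc (-1 : ℝ) 1) :
    ∫ s in -1..y, f' s * s = -tailMoment f y := by
  have h_uIcc : uIcc (-1 : ℝ) 1 = Icc (-1) 1 := uIcc_of_le (by norm_num)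
  have hy_mem : y ∈ uIcc (-1 : ℝ) 1 := h_uIcc ▸ hy
  have moment_int : IntervalIntegrable (fun s => f' s * s) volume (-1) 1 :=
    hint.mul_continuousOn continuousOn_id
  have right_subset : uIcc y 1 ⊆ uIcc (-1 : ℝ) 1 := uIcc_subset_uIcc_right hy_mem
  have total := integral_deriv_mul_id_eq_zero_of_odd (h_uIcc ▸ hderiv) hint (h_uIcc ▸ hodd)
  have tail := integral_deriv_mul_id_eq_tailMoment
    (fun s hs => (hderiv s (h_uIcc ▸ right_subset hs)).mono (h_uIcc ▸ right_subset))
    (hint.mono_set right_subset) h1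
  have split := intervalIntegral.integral_add_adjacent_intervals
    (moment_int.mono_set (uIcc_subset_uIcc_left hy_mem)) (moment_int.mono_set right_subset)
  linarith

end Odd

theorem stmt_9 (f f' : ℝ → ℝ)
    (hderiv : ∀ y ∈ Set.Icc (-1 : ℝ) 1, HasDerivWithinAt f (f' y) (Set.Icc (-1 : ℝ) 1) y)
    (hcont : ContinuousOn f' (Set.Icc (-1 : ℝ) 1))
    (h1 : f 1 = 1) (hm1 : f (-1) = -1)
    (hd1 : 0 < f' 1) (hdm1 : 0 < f' (-1))
    (hrange : ∀ y ∈ Set.Ioo (-1 : ℝ) 1, f y ∈ Set.Ioo (-1 : ℝ) 1)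
    (hodd : ∀ y ∈ Set.Icc (-1 : ℝ) 1, f (-y) = -f y) :
    (¬ (∀ y ∈ Set.Icc (-1 : ℝ) 1, f y = y) →
      6 * (∫ y in (0 : ℝ)..1, (1 - f y) * y) ^ 3 <
        (∫ y in (0 : ℝ)..1, (∫ s in (-1 : ℝ)..y, f' s * s) ^ 2 / (1 - (f y) ^ 2)) ^ 2) ∧
    ((∀ y ∈ Set.Icc (-1 : ℝ) 1, f y = y) →
      6 * (∫ y in (0 : ℝ)..1, (1 - f y) * y) ^ 3 =
        (∫ y in (0 : ℝ)..1, (∫ s in (-1 : ℝ)..y, f' s * s) ^ 2 / (1 - (f y) ^ 2)) ^ 2) := by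
  have hsub : Icc (0 : ℝ) 1 ⊆ Icc (-1) 1 := Icc_subset_Icc_left (by norm_num)
  have hf : ContinuousOn f (Icc 0 1) :=
    fun y hy => (hderiv y (hsub hy)).continuousWithinAt.mono hsub
  have hrange' : MapsTo f (Ico 0 1) (Ioo (-1) 1) :=
    fun y hy => hrange y ⟨neg_one_lt_zero.trans_le hy.1, hy.2⟩
  have hint := intervalIntegrable_tailMoment_sq_div hf h1 hrange'
    ((hderiv 1 (by simp)).mono hsub) hd1.ne'
  have I₁_eq : ∫ y in (0 : ℝ)..1, (∫ s in (-1 : ℝ)..y, f' s * s) ^ 2 / (1 - f y ^ 2) =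
      ∫ y in (0 : ℝ)..1, tailMoment f y ^ 2 / (1 - f y ^ 2) := by
    refine intervalIntegral.integral_congr fun y hy => ?_
    rw [uIcc_of_le zero_le_one] at hy
    simp only [integral_deriv_mul_id_eq_neg_tailMoment hderiv
      (hcont.intervalIntegrable_of_Icc (by norm_num)) h1 hodd (hsub hy), neg_sq]
  rw [I₁_eq, forall_eq_id_iff_of_odd hodd]
  exact stmt_9_general f hf h1 hrange' hint
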